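/- Let L be a finite lattice and φ ∈ M_1(L). Then for every pair a, b ∈ L, λ(φ; a, b) = B_φ(⟨a, b⟩*); that is, the maximum of φ(H) over paths H from a to b equals the Fréchet lower bound min{Φ(⟨a,b⟩*) : Φ ∈ M_∞(𝓛), Π(Φ) = φ}. -/

import Mathlib

/-!
A completely monotone `Φ` on `𝓛` is the containment probability `Φ(U) = μ{V ⊇ U}` of a random
up-set with marginals `φ`. Two facts give the theorem.

*Every tree gives a lower bound.* If `H` is a tree containing `a` and `b`, then
`φ(H) ≤ Φ(⟨H⟩*) ≤ Φ(⟨a,b⟩*)`. The vertex set is exhausted by adding one vertex `v` at a time,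
joined by an edge to a vertex `s` already present; 2-monotonicity at `⟨s ∨ v⟩*` shows that
`Φ(⟨S ∪ {v}⟩*) ≥ Φ(⟨S⟩*) + φ(v) − φ(s ∨ v)` (`phiTree_le`).

*The bound is attained.* Charge `φ(x ∨ y) − φ(y) ≥ 0` for a step from `x` to `y`, so that a path
from `a` has `φ(H) = φ(a) − cost`. Let `ψ(x)` be `φ(a)` minus the least cost of a path from `a`
to `x` (`exists_potential`). The inequality `ψ(x) + φ(y) − φ(x ∨ y) ≤ ψ(y)` makes both
`ψ` and `φ − ψ` monotone, and both are nonnegative. For nonnegative monotone `g`,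
the function `U ↦ min_U g` is completely monotone with marginals `g` (`minf_of_inf`), hence so is
`Φ(U) = min_U ψ + min_U (φ − ψ)` with marginals `φ`. Since `ψ(a) = φ(a)`, the second summand
vanishes at `⟨a,b⟩*`, and `Φ(⟨a,b⟩*) ≤ ψ(b)`, which is `φ(H)` for an optimal path `H`.
-/

attribute [local instance 50] Classical.propDecidable

/-- `U` is a member of `𝓛`: a nonempty dual order ideal (up-set) of `L`. -/
def MemL {L : Type*} [Lattice L] (U : Finset L) : Prop :=
  (∀ ⦃x y : L⦄, x ∈ U → x ≤ y → y ∈ U) ∧ U.Nonempty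

/-- The family `𝓛` of nonempty up-sets of `L`, as a finset of finsets. -/
noncomputable def LFam (L : Type*) [Lattice L] [Fintype L] : Finset (Finset L) :=
  Finset.univ.filter (fun U => MemL U)

/-- The successive difference operator on `𝓛` (ordered by reverse inclusion, so that
the meet of two up-sets is their union): `∇_U Φ(W) = Φ(W) − Φ(W ⊓ U) = Φ(W) − Φ(W ∪ U)`,
iterated over a list. -/
def succDiffU {L : Type*} [Lattice L] [DecidableEq L]
    (Φ : Finset L → ℝ) (l : List (Finset L)) : Finset L → ℝ :=
  l.foldl (fun Ψ U => fun W => Ψ W - Ψ (W ∪ U)) Φ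

/-- `Φ ∈ M_∞(𝓛)`: `Φ` is nonnegative and completely monotone on `𝓛`
(the empty list gives nonnegativity of `Φ` itself). -/
def Minf {L : Type*} [Lattice L] [DecidableEq L] (Φ : Finset L → ℝ) : Prop :=
  ∀ l : List (Finset L), (∀ U ∈ l, MemL U) → ∀ W : Finset L, MemL W →
    0 ≤ succDiffU Φ l W

/-- The principal up-set `⟨x⟩* = {y ∈ L : y ≥ x}`. -/
noncomputable def pUp {L : Type*} [Lattice L] [Fintype L] (x : L) : Finset L :=
  Finset.univ.filter (fun y => x ≤ y)

/-- The up-set `⟨A⟩*` generated by `A ⊆ L`. -/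
noncomputable def upGen {L : Type*} [Lattice L] [Fintype L] (A : Finset L) : Finset L :=
  Finset.univ.filter (fun y => ∃ a ∈ A, a ≤ y)

/-- `φ ∈ M_1(L)`: `φ` is nonnegative and monotone. -/
def M1 {L : Type*} [Lattice L] (φ : L → ℝ) : Prop :=
  (∀ x, 0 ≤ φ x) ∧ Monotone φ

/-- `f` is the Möbius inverse of `Φ` on `𝓛`: `Φ(U) = Σ_{V ⪯ U} f(V)`,
where `V ⪯ U` means `U ⊆ V`. -/
def IsMobiusInvL {L : Type*} [Lattice L] [Fintype L] (Φ f : Finset L → ℝ) : Prop :=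
  ∀ U : Finset L, MemL U → Φ U = ∑ V ∈ (LFam L).filter (fun V => U ⊆ V), f V

/-- A tree in `𝒯`: a connected acyclic simple graph whose (nonempty) vertex set is a
subset of `L`, given by its vertex finset and edge finset. -/
structure FinTree (L : Type*) [Lattice L] where
  verts : Finset L
  edges : Finset (Sym2 L)
  nonempty : verts.Nonempty
  loopless : ∀ e ∈ edges, ¬ e.IsDiag
  edge_mem : ∀ e ∈ edges, ∀ x ∈ e, x ∈ verts
  connected : ∀ x ∈ verts, ∀ y ∈ verts,
    (SimpleGraph.fromEdgeSet (edges : Set (Sym2 L))).Reachable x y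
  acyclic : (SimpleGraph.fromEdgeSet (edges : Set (Sym2 L))).IsAcyclic

/-- `φ(G) = Σ_{a ∈ G} φ(a) − Σ_{{a,b} ∈ E(G)} φ(a ∨ b)` for a tree `G ∈ 𝒯`. -/
noncomputable def phiTree {L : Type*} [Lattice L] (φ : L → ℝ) (G : FinTree L) : ℝ :=
  (∑ a ∈ G.verts, φ a) -
    ∑ e ∈ G.edges, Sym2.lift ⟨fun a b => φ (a ⊔ b), fun a b => by simp [sup_comm]⟩ e

/-- `H` is a path from `a` to `b`: a tree in `𝒯` whose only leaves are `a` and `b`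
(the one-vertex tree `{a}` being a path from `a` to `a`). -/
def IsPathTree {L : Type*} [Lattice L] (H : FinTree L) (a b : L) : Prop :=
  a ∈ H.verts ∧ b ∈ H.verts ∧
    ∀ x ∈ H.verts, (H.edges.filter (fun e => x ∈ e)).card ≤ 1 → x = a ∨ x = b

/-- `λ(φ; a, b)`: the maximum of `φ(H)` over paths `H` from `a` to `b`. -/
noncomputable def lam {L : Type*} [Lattice L] (φ : L → ℝ) (a b : L) : ℝ :=
  sSup {r : ℝ | ∃ H : FinTree L, IsPathTree H a b ∧ phiTree φ H = r}

/-- The successive λ-difference operator `Λ_{a_1,…,a_n} φ`, with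
`Λ_a φ(x) = φ(x) − λ(φ; a, x)` and `Λ_{a_1,…,a_n} φ = Λ_{a_n}(Λ_{a_1,…,a_{n−1}} φ)`. -/
noncomputable def lamSucc {L : Type*} [Lattice L] (φ : L → ℝ) (l : List L) : L → ℝ :=
  l.foldl (fun ψ a => fun x => ψ x - lam ψ a x) φ

/-! ### Lower bounds from trees -/

section Lower

variable {L : Type*} [Lattice L]

lemma MemL.union [DecidableEq L] {U V : Finset L} (hU : MemL U) (hV : MemL V) : MemL (U ∪ V) := by
  refine ⟨fun x y hx hxy => ?_, hU.2.mono Finset.subset_union_left⟩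
  rcases Finset.mem_union.1 hx with h | h
  · exact Finset.mem_union_left _ (hU.1 h hxy)
  · exact Finset.mem_union_right _ (hV.1 h hxy)

lemma Minf.antitone [DecidableEq L] {Φ : Finset L → ℝ} (h : Minf Φ) {U V : Finset L}
    (hU : MemL U) (hV : MemL V) (hUV : U ⊆ V) : Φ V ≤ Φ U := by
  have := h [V] (by simpa using hV) U hU
  simp only [succDiffU, List.foldl_cons, List.foldl_nil, Finset.union_eq_right.2 hUV] at this
  linarith

lemma Minf.two_monotone [DecidableEq L] {Φ : Finset L → ℝ} (h : Minf Φ) {W U V : Finset L}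
    (hW : MemL W) (hU : MemL U) (hV : MemL V) (hWU : W ⊆ U) (hWV : W ⊆ V) :
    Φ U + Φ V ≤ Φ W + Φ (U ∪ V) := by
  have := h [U, V] (by simp [hU, hV]) W hW
  simp only [succDiffU, List.foldl_cons, List.foldl_nil, Finset.union_eq_right.2 hWU,
    Finset.union_eq_right.2 hWV, Finset.union_comm V U] at this
  linarith

variable [Fintype L]

lemma mem_pUp {x y : L} : y ∈ pUp x ↔ x ≤ y := by simp [pUp]

lemma memL_pUp (x : L) : MemL (pUp x) :=
  ⟨fun _ _ h h' => mem_pUp.2 ((mem_pUp.1 h).trans h'), ⟨x, mem_pUp.2 le_rfl⟩⟩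

variable [DecidableEq L]

lemma memL_biUnion {S : Finset L} (hS : S.Nonempty) : MemL (S.biUnion pUp) := by
  refine ⟨fun x y hx hxy => ?_, ?_⟩
  · simp only [Finset.mem_biUnion, mem_pUp] at hx ⊢
    obtain ⟨s, hs, hsx⟩ := hx
    exact ⟨s, hs, hsx.trans hxy⟩
  · obtain ⟨s, hs⟩ := hS
    exact ⟨s, Finset.mem_biUnion.2 ⟨s, hs, mem_pUp.2 le_rfl⟩⟩

/-- The term `φ(x ∨ y)` contributed by the edge `{x, y}`. -/
noncomputable def edgeVal {L : Type*} [Lattice L] (φ : L → ℝ) : Sym2 L → ℝ :=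
  Sym2.lift ⟨fun a b => φ (a ⊔ b), fun a b => by simp [sup_comm]⟩

lemma edgeVal_mk {L : Type*} [Lattice L] (φ : L → ℝ) (x y : L) :
    edgeVal φ s(x, y) = φ (x ⊔ y) := rfl

/-- A spanning tree grown from one vertex gives the bound; any further edge would only decrease
the left-hand side, so the argument uses nothing but connectedness. -/
lemma phiTree_le {φ : L → ℝ} (hφ : M1 φ) {Φ : Finset L → ℝ} (hΦ : Minf Φ)
    (hproj : ∀ x, Φ (pUp x) = φ x) (H : FinTree L) :
    phiTree φ H ≤ Φ (H.verts.biUnion pUp) := by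
  obtain ⟨r, hr⟩ := H.nonempty
  have hnn : ∀ e, 0 ≤ edgeVal φ e := fun e => by
    induction e with | _ x y => exact hφ.1 _
  -- `good S`: the bound holds for the subgraph induced on `S`
  let good : Finset L → Prop := fun S => r ∈ S ∧ S ⊆ H.verts ∧
    (∑ x ∈ S, φ x) - ∑ e ∈ H.edges.filter (fun e => ∀ x ∈ e, x ∈ S), edgeVal φ e
      ≤ Φ (S.biUnion pUp)
  have hr0 : good {r} := by
    refine ⟨by simp, by simpa using hr, ?_⟩
    have := Finset.sum_nonneg (s := H.edges.filter (fun e => ∀ x ∈ e, x ∈ ({r} : Finset L)))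
      (fun e _ => hnn e)
    simp only [Finset.sum_singleton, Finset.singleton_biUnion, hproj]
    linarith
  obtain ⟨S, hS⟩ := (Finset.univ.filter good).exists_maximal ⟨{r}, by simpa using hr0⟩
  have hSg : good S := by simpa using hS.1
  by_cases hSv : S = H.verts
  · have h3 := hSg.2.2
    have hfil : H.edges.filter (fun e => ∀ x ∈ e, x ∈ S) = H.edges :=
      Finset.filter_true_of_mem fun e he x hx => hSv ▸ H.edge_mem e he x hx
    rw [hfil] at h3
    rw [← hSv]
    refine le_trans (le_of_eq ?_) h3
    rw [hSv]
    rfl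
  · exfalso
    obtain ⟨z, hz, hzS⟩ : ∃ z ∈ H.verts, z ∉ S := by
      by_contra! hcon
      exact hSv (Finset.Subset.antisymm hSg.2.1 hcon)
    obtain ⟨p⟩ := H.connected r hr z hz
    obtain ⟨d, -, hd1, hd2⟩ := p.exists_boundary_dart (S : Set L) hSg.1 hzS
    have hadj := d.adj
    rw [SimpleGraph.fromEdgeSet_adj] at hadj
    obtain ⟨hE, -⟩ := hadj
    generalize d.fst = s at *
    generalize d.snd = v at *
    have hvS : v ∉ S := hd2
    have hsS : s ∈ S := hd1
    have hgood : good (insert v S) := by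
      refine ⟨Finset.mem_insert_of_mem hSg.1, ?_, ?_⟩
      · exact Finset.insert_subset (H.edge_mem _ hE v (by simp)) hSg.2.1
      · have hsub : insert s(s, v) (H.edges.filter (fun e => ∀ x ∈ e, x ∈ S)) ⊆
            H.edges.filter (fun e => ∀ x ∈ e, x ∈ insert v S) := by
          intro e he
          rcases Finset.mem_insert.1 he with rfl | he
          · refine Finset.mem_filter.2 ⟨hE, fun x hx => ?_⟩
            rcases Sym2.mem_iff.1 hx with rfl | rfl
            · exact Finset.mem_insert_of_mem hsS
            · exact Finset.mem_insert_self _ _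
          · rw [Finset.mem_filter] at he ⊢
            exact ⟨he.1, fun x hx => Finset.mem_insert_of_mem (he.2 x hx)⟩
        have hsum := Finset.sum_le_sum_of_subset_of_nonneg hsub (fun e _ _ => hnn e)
        have hnot : s(s, v) ∉ H.edges.filter (fun e => ∀ x ∈ e, x ∈ S) :=
          fun h => hvS ((Finset.mem_filter.1 h).2 v (by simp))
        rw [Finset.sum_insert hnot, edgeVal_mk] at hsum
        have h2 := hΦ.two_monotone (memL_pUp (s ⊔ v)) (memL_pUp v)
          (memL_biUnion (S := S) ⟨s, hsS⟩)
          (fun y hy => mem_pUp.2 (le_sup_right.trans (mem_pUp.1 hy)))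
          (fun y hy => Finset.mem_biUnion.2
            ⟨s, hsS, mem_pUp.2 (le_sup_left.trans (mem_pUp.1 hy))⟩)
        rw [hproj, hproj] at h2
        rw [Finset.sum_insert hvS, Finset.biUnion_insert]
        have := hSg.2.2
        linarith
    have := hS.2 (y := insert v S) (by simpa using hgood) (Finset.subset_insert _ _)
    exact hvS (this (Finset.mem_insert_self _ _))

end Lower

/-! ### Minimum functions are completely monotone -/

section Upper

variable {L : Type*} [Lattice L]

/-- The minimum of `g` over `U`, with the value `0` at the empty set, which is not in `𝓛`. -/
noncomputable def upMin {L : Type*} (g : L → ℝ) (U : Finset L) : ℝ :=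
  if h : U.Nonempty then U.inf' h g else 0

lemma upMin_pUp [Fintype L] {g : L → ℝ} (hg : Monotone g) (x : L) : upMin g (pUp x) = g x := by
  have hx : x ∈ pUp x := mem_pUp.2 le_rfl
  rw [upMin, dif_pos ⟨x, hx⟩]
  exact le_antisymm (Finset.inf'_le _ hx) (Finset.le_inf' _ _ fun y hy => hg (mem_pUp.1 hy))

variable [DecidableEq L]

/-- Functions carrying unions to minima are stable under the difference operators, since
`∇_U Ψ(W) = Ψ(W) − min (Ψ(W)) (Ψ(U)) = max (Ψ(W) − Ψ(U)) 0`. -/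
lemma minf_of_inf {Ψ : Finset L → ℝ} (h0 : ∀ W, MemL W → 0 ≤ Ψ W)
    (hm : ∀ W U, MemL W → MemL U → Ψ (W ∪ U) = min (Ψ W) (Ψ U)) : Minf Ψ := by
  intro l
  induction l generalizing Ψ with
  | nil => intro _ W hW; exact h0 W hW
  | cons V l ih =>
    intro hl
    have hV : MemL V := hl V (by simp)
    refine ih (Ψ := fun W => Ψ W - Ψ (W ∪ V)) ?_ ?_ (fun U hU => hl U (by simp [hU]))
    · intro W hW
      rw [hm W V hW hV]
      exact sub_nonneg.2 (min_le_left _ _)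
    · intro W U hW hU
      simp only [hm _ V (hW.union hU) hV, hm W V hW hV, hm U V hU hV, hm W U hW hU]
      grind

lemma succDiffU_add (Φ Ψ : Finset L → ℝ) (l : List (Finset L)) (W : Finset L) :
    succDiffU (fun U => Φ U + Ψ U) l W = succDiffU Φ l W + succDiffU Ψ l W := by
  induction l generalizing Φ Ψ with
  | nil => rfl
  | cons V l ih =>
    have hsplit : (fun W => Φ W + Ψ W - (Φ (W ∪ V) + Ψ (W ∪ V))) =
        fun W => (Φ W - Φ (W ∪ V)) + (Ψ W - Ψ (W ∪ V)) := funext fun W => by ring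
    have := ih (fun W => Φ W - Φ (W ∪ V)) (fun W => Ψ W - Ψ (W ∪ V))
    rw [← hsplit] at this
    exact this

lemma Minf.add {Φ Ψ : Finset L → ℝ} (hΦ : Minf Φ) (hΨ : Minf Ψ) : Minf (fun U => Φ U + Ψ U) :=
  fun l hl W hW => by
    rw [succDiffU_add]
    exact add_nonneg (hΦ l hl W hW) (hΨ l hl W hW)

lemma upMin_union {L : Type*} [DecidableEq L] (g : L → ℝ) {U V : Finset L}
    (hU : U.Nonempty) (hV : V.Nonempty) :
    upMin g (U ∪ V) = min (upMin g U) (upMin g V) := by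
  rw [upMin, upMin, upMin, dif_pos hU, dif_pos hV, dif_pos (hU.mono Finset.subset_union_left)]
  exact Finset.inf'_union hU hV g

lemma minf_upMin {g : L → ℝ} (hg : ∀ x, 0 ≤ g x) : Minf (upMin g) :=
  minf_of_inf
    (fun W hW => by
      rw [upMin, dif_pos hW.2]
      exact Finset.le_inf' _ _ fun y _ => hg y)
    (fun _ _ hW hU => upMin_union g hW.2 hU.2)

end Upper

/-! ### Cheapest paths -/

section Paths

variable {L : Type*}

lemma path_acyclic {a b : L} (p : (⊤ : SimpleGraph L).Walk a b) (hp : p.IsPath) :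
    (SimpleGraph.fromEdgeSet {e | e ∈ p.edges}).IsAcyclic := by
  induction p with
  | nil => simp
  | @cons u v w h p ih =>
    rw [SimpleGraph.Walk.cons_isPath_iff] at hp
    have hE : (SimpleGraph.fromEdgeSet {e | e ∈ (SimpleGraph.Walk.cons h p).edges}) =
        SimpleGraph.fromEdgeSet {e | e ∈ p.edges} ⊔ SimpleGraph.edge u v := by
      rw [SimpleGraph.edge, ← SimpleGraph.fromEdgeSet_union]
      congr 1
      ext e
      simp
    rw [hE]
    refine (SimpleGraph.isAcyclic_add_edge_iff_of_not_reachable u v ?_).2 (ih hp.1)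
    -- `u` is isolated in the graph of the remaining path
    rintro ⟨q⟩
    cases q with
    | nil => exact h.ne rfl
    | cons h' q =>
      rw [SimpleGraph.fromEdgeSet_adj] at h'
      exact hp.2 (p.fst_mem_support_of_mem_edges h'.1)

lemma path_two_edges [DecidableEq L] {a b : L} (p : (⊤ : SimpleGraph L).Walk a b) (hp : p.IsPath)
    {x : L} (hx : x ∈ p.support) (hxa : x ≠ a) (hxb : x ≠ b) :
    ∃ e ∈ p.edges, ∃ e' ∈ p.edges, x ∈ e ∧ x ∈ e' ∧ e ≠ e' := by
  induction p with
  | nil => simp at hx; exact absurd hx hxa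
  | @cons u v w h p ih =>
    have hp' := (SimpleGraph.Walk.cons_isPath_iff h p).1 hp
    have hx' : x ∈ p.support := by simpa [hxa] using hx
    by_cases hxv : x = v
    · subst hxv
      cases p with
      | nil => exact absurd rfl hxb
      | @cons _ y _ h2 q =>
        refine ⟨s(u, x), by simp, s(x, y), by simp, by simp, by simp, fun he => hp'.2 ?_⟩
        have : u = y := by
          rcases Sym2.eq_iff.1 he with ⟨h1, -⟩ | ⟨h1, -⟩
          · exact absurd h1.symm hxa
          · exact h1
        subst this
        simp
    · obtain ⟨e, he, e', he', h1, h2, h3⟩ := ih hp'.1 hx' hxv hxb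
      exact ⟨e, by simp [he], e', by simp [he'], h1, h2, h3⟩

variable [Lattice L]

/-- The cost of a walk in the complete graph on `L`: a step from `x` to `y` costs
`φ(x ∨ y) − φ(y)`. -/
noncomputable def cost (φ : L → ℝ) {a b : L} (p : (⊤ : SimpleGraph L).Walk a b) : ℝ :=
  (p.darts.map (fun d => φ (d.fst ⊔ d.snd) - φ d.snd)).sum

lemma step_nonneg {φ : L → ℝ} (hφ : M1 φ) (x y : L) : 0 ≤ φ (x ⊔ y) - φ y :=
  sub_nonneg.2 (hφ.2 le_sup_right)

lemma cost_bypass_le [DecidableEq L] {φ : L → ℝ} (hφ : M1 φ) {a b : L}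
    (p : (⊤ : SimpleGraph L).Walk a b) : cost φ p.bypass ≤ cost φ p := by
  refine List.Sublist.sum_le_sum (p.darts_bypass_sublist_darts.map _) ?_
  intro x hx
  obtain ⟨d, -, rfl⟩ := List.mem_map.1 hx
  exact step_nonneg hφ _ _

lemma cost_eq (φ : L → ℝ) {a b : L} (p : (⊤ : SimpleGraph L).Walk a b) :
    (p.support.map φ).sum - (p.edges.map (edgeVal φ)).sum = φ a - cost φ p := by
  induction p with
  | nil => simp [cost]
  | cons h p ih =>
    simp only [cost, SimpleGraph.Walk.support_cons, SimpleGraph.Walk.edges_cons,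
      SimpleGraph.Walk.darts_cons, List.map_cons, List.sum_cons, edgeVal_mk] at ih ⊢
    linarith

/-- Along a walk the value `φ(a) − cost` never exceeds `φ` at the endpoint. -/
lemma cost_le (φ : L → ℝ) (hφ : M1 φ) {a b : L} (p : (⊤ : SimpleGraph L).Walk a b) :
    φ a - φ b ≤ cost φ p := by
  induction p with
  | nil => simp [cost]
  | @cons u v w h p ih =>
    have := hφ.2 (le_sup_left : u ≤ u ⊔ v)
    simp only [cost, SimpleGraph.Walk.darts_cons, List.map_cons, List.sum_cons] at ih ⊢
    linarith

lemma exists_tree_of_path {φ : L → ℝ} {a b : L} (p : (⊤ : SimpleGraph L).Walk a b)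
    (hp : p.IsPath) : ∃ H : FinTree L, IsPathTree H a b ∧ phiTree φ H = φ a - cost φ p := by
  classical
  have hset : ((p.edges.toFinset : Finset (Sym2 L)) : Set (Sym2 L)) = {e | e ∈ p.edges} := by
    ext e; simp
  have hreach : ∀ x ∈ p.support,
      (SimpleGraph.fromEdgeSet {e | e ∈ p.edges}).Reachable a x := fun x hx => by
    have hq : ∀ e ∈ (p.takeUntil x hx).edges,
        e ∈ (SimpleGraph.fromEdgeSet {e | e ∈ p.edges}).edgeSet := fun e he => by
      rw [SimpleGraph.edgeSet_fromEdgeSet]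
      exact ⟨p.edges_takeUntil_subset_edges hx he,
        SimpleGraph.not_isDiag_of_mem_edgeSet _ (SimpleGraph.Walk.edges_subset_edgeSet _ he)⟩
    exact ⟨(p.takeUntil x hx).transfer _ hq⟩
  let H : FinTree L :=
    { verts := p.support.toFinset
      edges := p.edges.toFinset
      nonempty := ⟨a, by simp⟩
      loopless := fun e he => SimpleGraph.not_isDiag_of_mem_edgeSet _
        (SimpleGraph.Walk.edges_subset_edgeSet _ (List.mem_toFinset.1 he))
      edge_mem := fun e he x hx => by
        rw [List.mem_toFinset] at he ⊢
        exact p.mem_support_of_mem_edges he hx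
      connected := fun x hx y hy => by
        rw [hset]
        exact (hreach x (List.mem_toFinset.1 hx)).symm.trans (hreach y (List.mem_toFinset.1 hy))
      acyclic := by
        rw [hset]
        exact path_acyclic p hp }
  refine ⟨H, ⟨by simp [H], by simp [H], fun x hx hcard => ?_⟩, ?_⟩
  · by_contra! hne
    obtain ⟨e, he, e', he', h1, h2, h3⟩ :=
      path_two_edges p hp (List.mem_toFinset.1 hx) hne.1 hne.2
    exact h3 (Finset.card_le_one.1 hcard e (by simp [H, he, h1]) e' (by simp [H, he', h2]))
  · rw [← cost_eq, ← List.sum_toFinset _ hp.support_nodup,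
      ← List.sum_toFinset _ hp.isTrail.edges_nodup]
    rfl

/-- The function `ψ(x) = λ(φ; a, x)`, characterised as `φ(a)` minus the cost of a cheapest
path from `a` to `x`. -/
lemma exists_potential [Fintype L] {φ : L → ℝ} (hφ : M1 φ) (a : L) :
    ∃ ψ : L → ℝ, φ a ≤ ψ a ∧ (∀ x, ψ x ≤ φ x) ∧
      (∀ x y, ψ x + φ y - φ (x ⊔ y) ≤ ψ y) ∧
      ∀ x, ∃ H : FinTree L, IsPathTree H a x ∧ phiTree φ H = ψ x := by
  classical
  have hex : ∀ x : L, ∃ p : (⊤ : SimpleGraph L).Walk a x, p.IsPath ∧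
      ∀ q : (⊤ : SimpleGraph L).Walk a x, cost φ p ≤ cost φ q := fun x => by
    obtain ⟨w⟩ : (⊤ : SimpleGraph L).Reachable a x :=
      have : Nonempty L := ⟨a⟩
      SimpleGraph.connected_top.preconnected a x
    have : Nonempty ((⊤ : SimpleGraph L).Path a x) := ⟨w.toPath⟩
    obtain ⟨p, hp⟩ := Finite.exists_min (fun p : (⊤ : SimpleGraph L).Path a x => cost φ p.1)
    exact ⟨p.1, p.2, fun q => (hp q.toPath).trans (cost_bypass_le hφ q)⟩
  choose P hP hmin using hex
  refine ⟨fun x => φ a - cost φ (P x), ?_, fun x => ?_, fun x y => ?_,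
    fun x => exists_tree_of_path (P x) (hP x)⟩
  · have := hmin a SimpleGraph.Walk.nil
    simp only [cost, SimpleGraph.Walk.darts_nil, List.map_nil, List.sum_nil] at this ⊢
    linarith
  · have := cost_le φ hφ (P x)
    linarith
  · by_cases hxy : x = y
    · subst hxy; simp
    · have := hmin y ((P x).concat ((SimpleGraph.top_adj x y).2 hxy))
      simp only [cost, SimpleGraph.Walk.darts_concat, List.concat_eq_append, List.map_append,
        List.sum_append, List.map_cons, List.map_nil, List.sum_cons, List.sum_nil] at this ⊢
      linarith

end Paths

/-- For `φ ∈ M_1(L)` and every pair `a, b ∈ L`, `λ(φ; a, b) = B_φ(⟨a,b⟩*)`: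
`λ(φ; a, b)` is the minimum of `Φ(⟨a,b⟩*)` over all `Φ ∈ M_∞(𝓛)` with `Π(Φ) = φ`. -/
theorem stmt_12 {L : Type*} [Lattice L] [Fintype L] [BoundedOrder L] [DecidableEq L]
    (φ : L → ℝ) (hφ : M1 φ) (a b : L) :
    IsLeast {s : ℝ | ∃ Φ : Finset L → ℝ, Minf Φ ∧ (∀ x : L, Φ (pUp x) = φ x) ∧
      s = Φ (pUp a ∪ pUp b)} (lam φ a b) := by
  obtain ⟨ψ, hψa, hψφ, hstep, hpath⟩ := exists_potential hφ a
  have hψmono : Monotone ψ := fun x y hxy => by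
    have := hstep x y
    rw [sup_eq_right.2 hxy] at this
    linarith
  have hdmono : Monotone (fun x => φ x - ψ x) := fun x y hxy => by
    have := hstep y x
    rw [sup_eq_left.2 hxy] at this
    simp only
    linarith
  -- the path from `a` through `⊥` shows that `ψ` is nonnegative
  have hψ0 : ∀ x, 0 ≤ ψ x := fun x => by
    have h1 := hstep a ⊥
    have h2 := hψmono (bot_le : ⊥ ≤ x)
    have h3 := hφ.1 ⊥
    rw [sup_bot_eq] at h1
    linarith
  have hlower : ∀ Φ : Finset L → ℝ, Minf Φ → (∀ x : L, Φ (pUp x) = φ x) →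
      ∀ H : FinTree L, IsPathTree H a b → phiTree φ H ≤ Φ (pUp a ∪ pUp b) := by
    intro Φ hΦ hproj H hH
    refine (phiTree_le hφ hΦ hproj H).trans (hΦ.antitone ((memL_pUp a).union (memL_pUp b))
      (memL_biUnion H.nonempty) ?_)
    exact Finset.union_subset (Finset.subset_biUnion_of_mem pUp hH.1)
      (Finset.subset_biUnion_of_mem pUp hH.2.1)
  obtain ⟨H₀, hH₀, hval⟩ := hpath b
  let Φ : Finset L → ℝ := fun U => upMin ψ U + upMin (fun x => φ x - ψ x) U
  have hΦ : Minf Φ := (minf_upMin hψ0).add (minf_upMin fun x => sub_nonneg.2 (hψφ x))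
  have hproj : ∀ x, Φ (pUp x) = φ x := fun x => by
    simp only [Φ, upMin_pUp hψmono, upMin_pUp hdmono]
    ring
  have hle : Φ (pUp a ∪ pUp b) ≤ ψ b := by
    simp only [Φ, upMin_union _ (memL_pUp a).2 (memL_pUp b).2, upMin_pUp hψmono,
      upMin_pUp hdmono]
    have h1 := min_le_right (ψ a) (ψ b)
    have h2 := min_le_left (φ a - ψ a) (φ b - ψ b)
    linarith
  have heq : ψ b = Φ (pUp a ∪ pUp b) := le_antisymm (hval ▸ hlower Φ hΦ hproj H₀ hH₀) hle
  have hlam : lam φ a b = ψ b := by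
    refine IsGreatest.csSup_eq ⟨⟨H₀, hH₀, hval⟩, ?_⟩
    rintro r ⟨H, hH, rfl⟩
    rw [heq]
    exact hlower Φ hΦ hproj H hH
  rw [hlam]
  refine ⟨⟨Φ, hΦ, hproj, heq⟩, ?_⟩
  rintro s ⟨Φ', hΦ', hproj', rfl⟩
  exact hval ▸ hlower Φ' hΦ' hproj' H₀ hH₀
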